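/- A function φ : ℕ → ℂ belongs to R₊(T_∞) if and only if φ belongs to R₊(T_q) for every q with 2 ≤ q < ∞; that is, R₊(T_∞) = ⋂_{q≥2} R₊(T_q). Moreover, for every 2 ≤ q < ∞, R₊(T_{q+1}) ⊆ R₊(T_q). -/

import Mathlib

/-!
The words over an alphabet form a tree, a word `a :: l` being joined to `l`. In a tree rooted at
`r`, label the neighbours of each vertex injectively by letters: a walk ending at `r` is then
determined by the labels read along it. Sending a vertex to the labels along the path to `r` is thus
an injective homomorphism to the tree of words, and such a homomorphism preserves distances because
paths in a tree are unique.

Both families of trees live inside the words over `ℕ`: `T_∞` is the tree of all words, and `T_q` is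
spanned by the words with letters `< q`, except that the letter next to the root may also be `q`.
A `(q+1)`-homogeneous tree embeds isometrically in the words over `q + 1` letters, hence both in
`T_∞` and in `T_{q+1}`; and `T_∞` is the increasing union of the `T_q`, while positive definiteness
only involves finitely many points at a time.
-/

open MeasureTheory Filter Finset
open scoped ComplexOrder

/-- The polynomials `P_n^{(q)}`. -/
noncomputable def treeP (q : ℕ) : ℕ → ℝ → ℝ
  | 0, _ => 1
  | 1, x => x
  | (n+2), x => (1 + 1/(q:ℝ)) * x * treeP q (n+1) x - (1/(q:ℝ)) * treeP q n x

/-- The polynomials `Q_n^{(q)}`. -/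
noncomputable def treeQ (q : ℕ) : ℕ → ℝ → ℝ
  | 0, _ => 1
  | 1, x => (1 + 1/(q:ℝ)) * x
  | (n+2), x => (1 + 1/(q:ℝ)) * x * treeQ q (n+1) x - (1/(q:ℝ)) * treeQ q n x

/-- A kernel `ψ` on a set `X` is positive definite. -/
def IsPDKernel {X : Type*} (ψ : X → X → ℂ) : Prop :=
  ∀ (n : ℕ) (x : Fin n → X) (z : Fin n → ℂ),
    0 ≤ ∑ i, ∑ j, ψ (x i) (x j) * (starRingEnd ℂ) (z i) * z j

/-- `G` is a `(q+1)`-homogeneous tree: connected, acyclic, every vertex has exactly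
`q+1` neighbours. -/
def IsHomTree {V : Type} (G : SimpleGraph V) (q : ℕ) : Prop :=
  G.Connected ∧ G.IsAcyclic ∧ ∀ v : V, (G.neighborSet v).ncard = q + 1

/-- `G` is a homogeneous tree of countably infinite degree. -/
def IsInfTree {V : Type} (G : SimpleGraph V) : Prop :=
  G.Connected ∧ G.IsAcyclic ∧ ∀ v : V, (G.neighborSet v).Countable ∧ (G.neighborSet v).Infinite

/-! ### Positive definite kernels and graph distances -/

lemma IsPDKernel.comp {X Y : Type*} {ψ : Y → Y → ℂ} (hψ : IsPDKernel ψ) (f : X → Y) :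
    IsPDKernel fun x y => ψ (f x) (f y) :=
  fun n x z => hψ n (f ∘ x) z

lemma isPDKernel_of_directed_cover {X ι : Type*} [Nonempty ι] {ψ : X → X → ℂ} {s : ι → Set X}
    (hs : Directed (· ⊆ ·) s) (hcover : ∀ x, ∃ i, x ∈ s i)
    (hψ : ∀ i, IsPDKernel fun x y : s i => ψ x y) : IsPDKernel ψ := by
  intro n x z
  choose index mem_index using fun k => hcover (x k)
  obtain ⟨i, hi⟩ := hs.finite_le index
  exact hψ i n (fun k => ⟨x k, hi k (mem_index k)⟩) z

lemma dist_map_of_injective {V W : Type*} {G : SimpleGraph V} {H : SimpleGraph W}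
    (hG : G.Connected) (hH : H.IsAcyclic) (f : G →g H) (hf : Function.Injective f) (x y : V) :
    H.dist (f x) (f y) = G.dist x y := by
  obtain ⟨p, hp, hp_length⟩ := hG.exists_path_of_dist x y
  obtain ⟨r, hr, hr_length⟩ := (p.map f).reachable.exists_path_of_dist
  have hr_eq : r = p.map f :=
    congrArg Subtype.val ((hH.subsingleton_path _ _).elim ⟨r, hr⟩ ⟨p.map f, hp.map hf⟩)
  rw [← hr_length, ← hp_length, hr_eq, SimpleGraph.Walk.length_map]

/-! ### The tree of words -/

/-- The tree of words over `α`: the word `a :: l` is a child of `l`, and the root is `[]`. -/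
def wordTree (α : Type*) : SimpleGraph (List α) where
  Adj x y := (∃ a, x = a :: y) ∨ ∃ a, y = a :: x
  symm := ⟨fun _ _ h => h.symm⟩
  loopless := ⟨by rintro x (⟨a, h⟩ | ⟨a, h⟩) <;> exact List.cons_ne_self a x h.symm⟩

section WordTree

variable {α β : Type*}

lemma wordTree_adj_cons (a : α) (l : List α) : (wordTree α).Adj l (a :: l) :=
  Or.inr ⟨a, rfl⟩

lemma suffix_of_adj_deleteEdges {a : α} {l x y : List α}
    (hxy : ((wordTree α).deleteEdges {s(l, a :: l)}).Adj x y) (hy : (a :: l) <:+ y) :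
    (a :: l) <:+ x := by
  rw [SimpleGraph.deleteEdges_adj] at hxy
  obtain ⟨⟨b, rfl⟩ | ⟨b, rfl⟩, hne⟩ := hxy
  · exact hy.trans (List.suffix_cons b y)
  · rcases List.suffix_cons_iff.1 hy with h | h
    · obtain ⟨rfl, rfl⟩ := List.cons.inj h
      exact absurd rfl hne
    · exact h

-- Without the edge from `l` to `a :: l`, no walk leaves the set of words ending in `a :: l`.
lemma wordTree_isBridge (a : α) (l : List α) : (wordTree α).IsBridge s(l, a :: l) := by
  rw [SimpleGraph.isBridge_iff]
  rintro ⟨w⟩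
  have suffix_of_walk {x y : List α} (p : ((wordTree α).deleteEdges {s(l, a :: l)}).Walk x y)
      (hy : (a :: l) <:+ y) : (a :: l) <:+ x := by
    induction p with
    | nil => exact hy
    | cons h _ ih => exact suffix_of_adj_deleteEdges h (ih hy)
  have : l.length + 1 ≤ l.length := (suffix_of_walk w (List.suffix_refl _)).length_le
  omega

lemma wordTree_isAcyclic : (wordTree α).IsAcyclic := by
  rw [SimpleGraph.isAcyclic_iff_forall_adj_isBridge]
  rintro x y (⟨a, rfl⟩ | ⟨a, rfl⟩)
  · exact Sym2.eq_swap ▸ wordTree_isBridge a y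
  · exact wordTree_isBridge a x

lemma wordTree_induce_connected {s : Set (List α)} (nil_mem : [] ∈ s)
    (mem_of_cons_mem : ∀ a l, a :: l ∈ s → l ∈ s) : ((wordTree α).induce s).Connected := by
  have reachable_nil (l : List α) (hl : l ∈ s) :
      ((wordTree α).induce s).Reachable ⟨l, hl⟩ ⟨[], nil_mem⟩ := by
    induction l with
    | nil => rfl
    | cons a t ih =>
      have hadj : ((wordTree α).induce s).Adj ⟨a :: t, hl⟩ ⟨t, mem_of_cons_mem a t hl⟩ :=
        (wordTree_adj_cons a t).symm
      exact hadj.reachable.trans (ih _)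
  have : Nonempty s := ⟨⟨[], nil_mem⟩⟩
  exact ⟨fun x y => (reachable_nil x x.2).trans (reachable_nil y y.2).symm⟩

lemma wordTree_connected : (wordTree α).Connected :=
  (SimpleGraph.induceUnivIso _).connected_iff.1
    (wordTree_induce_connected (Set.mem_univ _) fun _ _ _ => Set.mem_univ _)

lemma wordTree_dist_map {f : α → β} (hf : Function.Injective f) (x y : List α) :
    (wordTree β).dist (x.map f) (y.map f) = (wordTree α).dist x y := by
  let F : wordTree α →g wordTree β :=
    ⟨List.map f, by
      rintro x y (⟨a, rfl⟩ | ⟨a, rfl⟩)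
      · exact (wordTree_adj_cons _ _).symm
      · exact wordTree_adj_cons _ _⟩
  exact dist_map_of_injective wordTree_connected wordTree_isAcyclic F (List.map_injective_iff.2 hf)
    x y

lemma isInfTree_wordTree : IsInfTree (wordTree ℕ) := by
  refine ⟨wordTree_connected, wordTree_isAcyclic, fun l => ⟨Set.to_countable _, ?_⟩⟩
  exact Set.infinite_of_injective_forall_mem (fun _ _ => List.head_eq_of_cons_eq)
    fun a => wordTree_adj_cons a l

end WordTree

/-! ### Embedding trees in the tree of words -/

section Embedding

variable {V α : Type*} {G : SimpleGraph V}

/-- The labels read along a walk, where a step from `v` to `u` contributes the label of `v` among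
the neighbours of `u`. It is used for walks towards a root, so that `u` is the parent of `v`. -/
def labelWord (e : ∀ u, G.neighborSet u ↪ α) {v r : V} (p : G.Walk v r) : List α :=
  p.darts.map fun d => e d.snd ⟨d.fst, d.adj.symm⟩

lemma eq_of_labelWord_eq (e : ∀ u, G.neighborSet u ↪ α) {v w r : V} (p : G.Walk v r)
    (q : G.Walk w r) (h : labelWord e p = labelWord e q) : v = w := by
  induction p generalizing w with
  | nil => cases q with
    | nil => rfl
    | cons hw q => simp [labelWord] at h
  | cons hv p ih => cases q with
    | nil => simp [labelWord] at h
    | cons hw q =>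
      obtain ⟨label_eq, word_eq⟩ := List.cons.inj h
      obtain rfl := ih q word_eq
      exact congrArg Subtype.val ((e _).injective label_eq)

lemma exists_isometry_wordTree (hG : G.IsTree) (e : ∀ u, G.neighborSet u ↪ α) :
    ∃ f : V → List α, ∀ x y, (wordTree α).dist (f x) (f y) = G.dist x y := by
  obtain ⟨r⟩ := hG.connected.nonempty
  choose path isPath length_path using fun v => hG.connected.exists_path_of_dist v r
  have adj_of_dist_eq {u v : V} (h : G.Adj u v) (hd : G.dist r v = G.dist r u + 1) :
      (wordTree α).Adj (labelWord e (path u)) (labelWord e (path v)) := by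
    have cons_isPath : ((path u).cons h.symm).IsPath := by
      apply SimpleGraph.Walk.isPath_of_length_eq_dist
      rw [SimpleGraph.Walk.length_cons, length_path, SimpleGraph.dist_comm, ← hd,
        SimpleGraph.dist_comm]
    have path_eq : path v = (path u).cons h.symm :=
      (hG.existsUnique_path v r).unique (isPath v) cons_isPath
    rw [path_eq]
    exact wordTree_adj_cons _ _
  let f : G →g wordTree α :=
    ⟨fun v => labelWord e (path v), fun {u v} h =>
      (hG.dist_eq_dist_add_one_of_adj r h).elim
        (fun hd => (adj_of_dist_eq h.symm hd).symm) (adj_of_dist_eq h)⟩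
  exact ⟨f, dist_map_of_injective hG.connected wordTree_isAcyclic f
    fun v w => eq_of_labelWord_eq e (path v) (path w)⟩

lemma isPDKernel_dist_of_wordTree {φ : ℕ → ℂ} (hG : G.IsTree) (e : ∀ u, G.neighborSet u ↪ α)
    (hφ : IsPDKernel fun x y => φ ((wordTree α).dist x y)) :
    IsPDKernel fun x y => φ (G.dist x y) := by
  obtain ⟨f, hf⟩ := exists_isometry_wordTree hG e
  simpa only [hf] using hφ.comp f

end Embedding

/-! ### Models of the homogeneous trees -/

section Branching

variable {α : Type*} {S : List α → Set α}

/-- The subtree of the tree of words in which `a :: l` is a child of `l` only if `a ∈ S l`. -/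
def branchingWords (S : List α → Set α) : Set (List α) :=
  {l | ∀ a t, a :: t <:+ l → a ∈ S t}

lemma nil_mem_branchingWords : [] ∈ branchingWords S := by
  simp [branchingWords]

lemma cons_mem_branchingWords {a : α} {l : List α} :
    a :: l ∈ branchingWords S ↔ a ∈ S l ∧ l ∈ branchingWords S := by
  simp only [branchingWords, Set.mem_ofPred_eq, List.suffix_cons_iff, List.cons.injEq]
  grind

lemma branchingWords_mono {T : List α → Set α} (h : ∀ l, S l ⊆ T l) :
    branchingWords S ⊆ branchingWords T :=
  fun _ hl a t hat => h t (hl a t hat)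

lemma branchingWords_connected : ((wordTree α).induce (branchingWords S)).Connected :=
  wordTree_induce_connected nil_mem_branchingWords fun _ _ h => (cons_mem_branchingWords.1 h).2

lemma branchingWords_dist (x y : branchingWords S) :
    ((wordTree α).induce (branchingWords S)).dist x y = (wordTree α).dist x y :=
  (dist_map_of_injective branchingWords_connected wordTree_isAcyclic
    (SimpleGraph.Embedding.induce _).toHom Subtype.val_injective x y).symm

lemma image_neighborSet_branchingWords (l : branchingWords S) :
    Subtype.val '' ((wordTree α).induce (branchingWords S)).neighborSet l =
      {t | ∃ a, l.1 = a :: t} ∪ (· :: l.1) '' S l := by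
  obtain ⟨l, hl⟩ := l
  ext x
  constructor
  · rintro ⟨⟨y, hy⟩, ⟨a, h⟩ | ⟨a, h⟩, rfl⟩
    · exact Or.inl ⟨a, h⟩
    · obtain rfl : y = a :: l := h
      exact Or.inr ⟨a, (cons_mem_branchingWords.1 hy).1, rfl⟩
  · rintro (⟨a, rfl⟩ | ⟨a, ha, rfl⟩)
    · exact ⟨⟨x, (cons_mem_branchingWords.1 hl).2⟩, (wordTree_adj_cons a x).symm, rfl⟩
    · exact ⟨⟨a :: l, cons_mem_branchingWords.2 ⟨ha, hl⟩⟩, wordTree_adj_cons a l, rfl⟩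

lemma encard_neighborSet_branchingWords (l : branchingWords S) :
    (((wordTree α).induce (branchingWords S)).neighborSet l).encard =
      {t | ∃ a, l.1 = a :: t}.encard + (S l).encard := by
  have hdisj : Disjoint {t | ∃ a, l.1 = a :: t} ((· :: l.1) '' S l) := by
    rw [Set.disjoint_left]
    rintro t ⟨a, ha⟩ ⟨b, -, rfl⟩
    have : l.1.length = l.1.length + 2 := congrArg List.length ha
    omega
  have hinj : Function.Injective (· :: l.1) := fun _ _ => List.head_eq_of_cons_eq
  rw [← Subtype.val_injective.encard_image, image_neighborSet_branchingWords,
    Set.encard_union_eq hdisj, hinj.encard_image]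

end Branching

/-- The letters allowed in front of a word in `homWords q`. The root has no parent, hence one more
child than the other vertices. -/
def homLetters (q : ℕ) : List ℕ → Set ℕ
  | [] => Set.Iio (q + 1)
  | _ :: _ => Set.Iio q

/-- The words spanning a model of `T_q` inside the tree of words over `ℕ`. -/
def homWords (q : ℕ) : Set (List ℕ) :=
  branchingWords (homLetters q)

lemma Iio_subset_homLetters (q : ℕ) (l : List ℕ) : Set.Iio q ⊆ homLetters q l := by
  cases l with
  | nil => exact Set.Iio_subset_Iio q.le_succ
  | cons => exact subset_rfl

lemma mem_homWords_of_forall_lt {q : ℕ} {l : List ℕ} (h : ∀ a ∈ l, a < q) : l ∈ homWords q :=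
  fun a t hat => Iio_subset_homLetters q t (h a (hat.mem List.mem_cons_self))

lemma homWords_monotone : Monotone homWords := by
  refine fun q q' hqq' => branchingWords_mono fun l => ?_
  cases l with
  | nil => exact Set.Iio_subset_Iio (Nat.succ_le_succ hqq')
  | cons => exact Set.Iio_subset_Iio hqq'

lemma isHomTree_homWords (q : ℕ) : IsHomTree ((wordTree ℕ).induce (homWords q)) q := by
  refine ⟨branchingWords_connected, wordTree_isAcyclic.induce _, fun l => ?_⟩
  have hencard : (((wordTree ℕ).induce (homWords q)).neighborSet l).encard =
      {t | ∃ a, l.1 = a :: t}.encard + (homLetters q l).encard :=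
    encard_neighborSet_branchingWords l
  have encard_Iio (n : ℕ) : (Set.Iio n).encard = n := by
    rw [← Finset.coe_Iio, Set.encard_coe_eq_coe_finsetCard, Nat.card_Iio]
  rw [Set.ncard, hencard]
  obtain ⟨_ | ⟨b, t⟩, hl⟩ := l
  · simp [homLetters, encard_Iio]
  · simp [homLetters, encard_Iio, add_comm]

lemma isPDKernel_homWords {φ : ℕ → ℂ} {q : ℕ}
    (h : ∀ (V : Type) (G : SimpleGraph V), IsHomTree G q → IsPDKernel fun x y => φ (G.dist x y)) :
    IsPDKernel fun x y : homWords q => φ ((wordTree ℕ).dist x y) := by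
  have hPD := h _ _ (isHomTree_homWords q)
  simpa only [homWords, branchingWords_dist] using hPD

lemma isPDKernel_wordTree_fin {φ : ℕ → ℂ} {q : ℕ}
    (h : IsPDKernel fun x y : homWords q => φ ((wordTree ℕ).dist x y)) :
    IsPDKernel fun x y => φ ((wordTree (Fin q)).dist x y) := by
  have map_mem (l : List (Fin q)) : l.map Fin.val ∈ homWords q :=
    mem_homWords_of_forall_lt fun a ha => by
      obtain ⟨i, -, rfl⟩ := List.mem_map.1 ha
      exact i.isLt
  simpa only [wordTree_dist_map Fin.val_injective] using h.comp fun l => ⟨l.map Fin.val, map_mem l⟩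

lemma isPDKernel_wordTree_nat {φ : ℕ → ℂ} (m : ℕ)
    (h : ∀ q, m ≤ q → IsPDKernel fun x y : homWords q => φ ((wordTree ℕ).dist x y)) :
    IsPDKernel fun x y => φ ((wordTree ℕ).dist x y) := by
  refine isPDKernel_of_directed_cover (s := fun k => homWords (m + k))
    (homWords_monotone.comp (add_right_mono (a := m))).directed_le (fun l => ⟨l.sum + 1, ?_⟩)
    fun k => h (m + k) (Nat.le_add_right m k)
  refine mem_homWords_of_forall_lt fun a ha => ?_
  have : a ≤ l.sum := List.le_sum_of_mem ha
  omega

section Homogeneous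

variable {V : Type} {G : SimpleGraph V}

lemma IsHomTree.isTree {q : ℕ} (hG : IsHomTree G q) : G.IsTree :=
  ⟨hG.1, hG.2.1⟩

lemma IsHomTree.nonempty_neighborSet_equiv {q : ℕ} (hG : IsHomTree G q) (v : V) :
    Nonempty (G.neighborSet v ≃ Fin (q + 1)) := by
  have hcard : Nat.card (G.neighborSet v) = q + 1 := hG.2.2 v
  have : Finite (G.neighborSet v) := Nat.finite_of_card_ne_zero (by omega)
  exact ⟨Finite.equivFinOfCardEq hcard⟩

lemma IsInfTree.isTree (hG : IsInfTree G) : G.IsTree :=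
  ⟨hG.1, hG.2.1⟩

lemma IsInfTree.nonempty_neighborSet_embedding (hG : IsInfTree G) (v : V) :
    Nonempty (G.neighborSet v ↪ ℕ) :=
  have := (hG.2.2 v).1.to_subtype
  nonempty_embedding_nat _

end Homogeneous

theorem stmt_19 (φ : ℕ → ℂ) :
    ((∀ (V : Type) (G : SimpleGraph V), IsInfTree G →
        IsPDKernel (fun x y => φ (G.dist x y)))
      ↔ (∀ q : ℕ, 2 ≤ q → ∀ (V : Type) (G : SimpleGraph V), IsHomTree G q →
          IsPDKernel (fun x y => φ (G.dist x y)))) ∧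
    (∀ q : ℕ, 2 ≤ q →
      (∀ (V : Type) (G : SimpleGraph V), IsHomTree G (q+1) →
          IsPDKernel (fun x y => φ (G.dist x y))) →
      (∀ (V : Type) (G : SimpleGraph V), IsHomTree G q →
          IsPDKernel (fun x y => φ (G.dist x y)))) := by
  refine ⟨⟨fun h q _ V G hG => ?_, fun h V G hG => ?_⟩, fun q _ h V G hG => ?_⟩
  · have e v := (hG.nonempty_neighborSet_equiv v).some.toEmbedding.trans Fin.valEmbedding
    exact isPDKernel_dist_of_wordTree hG.isTree e (h _ _ isInfTree_wordTree)
  · have e v := (hG.nonempty_neighborSet_embedding v).some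
    exact isPDKernel_dist_of_wordTree hG.isTree e
      (isPDKernel_wordTree_nat 2 fun q hq => isPDKernel_homWords (h q hq))
  · have e v := (hG.nonempty_neighborSet_equiv v).some.toEmbedding
    exact isPDKernel_dist_of_wordTree hG.isTree e
      (isPDKernel_wordTree_fin (isPDKernel_homWords h))
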